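/- Let X be a class of objects of an abelian category A, L ∈ LPRes(X), and 0 → M′ → M → M″ → 0 a Hom(X,−)-acyclic complex in A. Then there is a long exact sequence of abelian groups 0 → Ext̲⁰_X(L,M′) → Ext̲⁰_X(L,M) → Ext̲⁰_X(L,M″) → Ext̲¹_X(L,M′) → ⋯ → Ext̲ⁱ_X(L,M′) → Ext̲ⁱ_X(L,M) → Ext̲ⁱ_X(L,M″) → Ext̲^{i+1}_X(L,M′) → ⋯. -/

import Mathlib

/-!
The terms of `R` lie in `𝒳` and `0 → M' → M → M'' → 0` is `Hom(𝒳,-)`-acyclic, so the rows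
`0 → Hom(Rₙ, M') → Hom(Rₙ, M) → Hom(Rₙ, M'') → 0` are exact and form a short exact sequence of
cochain complexes of abelian groups. The theorem is its long exact cohomology sequence, obtained
here by a direct diagram chase.

Degree zero is treated together with the others: `coboundaries N n` is trivial for `n = 0`, and
`extClass N n` is a surjection from the cocycles onto `ExtGrp N n` whose kernel is the
coboundaries. The connecting map comes from the group `Zigzag` of pairs `(y, v)` with
`v ≫ α = d ≫ y`: it maps onto `Ext(L, M'')` through `y ≫ β`, and the class of `v` depends only on
the image (`zigzag_ker_le`), so `(y, v) ↦ [v]` factors through a homomorphism, without any choice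
of lifts.
-/

open CategoryTheory CategoryTheory.Limits

universe w w' v u

namespace BalancedSystems

variable {D : Type u} [Category.{v} D] [Abelian D]

/-- A class of objects is closed under isomorphisms. -/
def IsoClosed (X : Set D) : Prop := ∀ ⦃A B : D⦄, (A ≅ B) → A ∈ X → B ∈ X

/-- `f : A ⟶ B` and `g : B ⟶ E` form a short exact sequence `0 → A → B → E → 0`. -/
def IsSES {A B E : D} (f : A ⟶ B) (g : B ⟶ E) : Prop :=
  ∃ w : f ≫ g = 0, (ShortComplex.mk f g w).ShortExact

/-- A class is closed under extensions. -/
def ExtensionClosed (X : Set D) : Prop :=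
  ∀ ⦃A E B : D⦄ (f : A ⟶ E) (g : E ⟶ B), A ∈ X → B ∈ X → IsSES f g → E ∈ X

/-- A class is closed under direct summands. -/
def SummandClosed (X : Set D) : Prop :=
  ∀ ⦃A B : D⦄ (i : A ⟶ B) (r : B ⟶ A), i ≫ r = 𝟙 A → B ∈ X → A ∈ X

open ZeroObject in
/-- A class is pointed, i.e. contains the zero object. -/
def Pointed (X : Set D) : Prop := (0 : D) ∈ X

/-- A class is closed under finite coproducts. -/
def FinCoprodClosed (X : Set D) : Prop :=
  Pointed X ∧ ∀ ⦃A B : D⦄, A ∈ X → B ∈ X → (A ⊞ B) ∈ X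

/-- `X` is a generator in `X''`: every object of `X''` is an epimorphic image of an object of `X`. -/
def GeneratorIn (X X'' : Set D) : Prop :=
  ∀ M ∈ X'', ∃ A ∈ X, ∃ p : A ⟶ M, Epi p

/-- `Y` is a cogenerator in `Y''`. -/
def CogeneratorIn (Y Y'' : Set D) : Prop :=
  ∀ N ∈ Y'', ∃ B ∈ Y, ∃ j : N ⟶ B, Mono j

/-- `ω` is a relative quasi-cogenerator in `X`. -/
def RelQuasiCogenerator (ω X : Set D) : Prop :=
  ∀ M ∈ X, ∃ W ∈ ω, ∃ M' ∈ X, ∃ (f : M ⟶ W) (g : W ⟶ M'), IsSES f g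

/-- `ω` is a relative cogenerator in `X`. -/
def RelCogenerator (ω X : Set D) : Prop :=
  ω ⊆ X ∧ RelQuasiCogenerator ω X

/-- `ν` is a relative quasi-generator in `Y`. -/
def RelQuasiGenerator (ν Y : Set D) : Prop :=
  ∀ N ∈ Y, ∃ V ∈ ν, ∃ N' ∈ Y, ∃ (f : N' ⟶ V) (g : V ⟶ N), IsSES f g

/-- `ν` is a relative generator in `Y`. -/
def RelGenerator (ν Y : Set D) : Prop :=
  ν ⊆ Y ∧ RelQuasiGenerator ν Y

/-- A (not necessarily exact) left resolution `⋯ → obj 1 → obj 0 → M → 0`. -/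
structure LeftRes (M : D) : Type (max u v) where
  obj : ℕ → D
  d : ∀ n : ℕ, obj (n+1) ⟶ obj n
  aug : obj 0 ⟶ M
  dd : ∀ n : ℕ, d (n+1) ≫ d n = 0
  daug : d 0 ≫ aug = 0

namespace LeftRes

variable {M : D} (R : LeftRes M)

/-- All terms of the resolution belong to the class `X`. -/
def InClass (X : Set D) : Prop := ∀ n, R.obj n ∈ X

/-- The resolution is `Hom(X,-)`-acyclic, i.e. proper. -/
def IsProper (X : Set D) : Prop :=
  ∀ A ∈ X,
    (∀ f : A ⟶ M, ∃ g : A ⟶ R.obj 0, g ≫ R.aug = f) ∧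
    (∀ f : A ⟶ R.obj 0, f ≫ R.aug = 0 → ∃ g : A ⟶ R.obj 1, g ≫ R.d 0 = f) ∧
    (∀ (n : ℕ) (f : A ⟶ R.obj (n+1)), f ≫ R.d n = 0 → ∃ g : A ⟶ R.obj (n+2), g ≫ R.d (n+1) = f)

/-- The resolution (with its augmentation) is `Hom(-,Y)`-acyclic. -/
def IsCoacyclic (Y : Set D) : Prop :=
  ∀ B ∈ Y,
    (∀ u : M ⟶ B, R.aug ≫ u = 0 → u = 0) ∧
    (∀ u : R.obj 0 ⟶ B, R.d 0 ≫ u = 0 → ∃ v : M ⟶ B, R.aug ≫ v = u) ∧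
    (∀ (n : ℕ) (u : R.obj (n+1) ⟶ B), R.d (n+1) ≫ u = 0 → ∃ v : R.obj n ⟶ B, R.d n ≫ v = u)

/-- The augmented complex `⋯ → obj 1 → obj 0 → M → 0` is exact. -/
def IsExactRes : Prop :=
  Epi R.aug ∧ (ShortComplex.mk (R.d 0) R.aug R.daug).Exact ∧
    ∀ n : ℕ, (ShortComplex.mk (R.d (n+1)) (R.d n) (R.dd n)).Exact

/-- The resolution is admissible: `obj 1 → obj 0 → M → 0` is exact. -/
def IsAdmissible : Prop :=
  Epi R.aug ∧ (ShortComplex.mk (R.d 0) R.aug R.daug).Exact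

end LeftRes

/-- The class of objects admitting a proper left `X`-resolution. -/
def LPRes (X : Set D) : Set D :=
  {M | ∃ R : LeftRes M, R.InClass X ∧ R.IsProper X}

/-- A (not necessarily exact) right resolution `0 → N → obj 0 → obj 1 → ⋯`. -/
structure RightRes (N : D) : Type (max u v) where
  obj : ℕ → D
  d : ∀ n : ℕ, obj n ⟶ obj (n+1)
  aug : N ⟶ obj 0
  dd : ∀ n : ℕ, d n ≫ d (n+1) = 0
  daug : aug ≫ d 0 = 0

namespace RightRes

variable {N : D} (S : RightRes N)

def InClass (Y : Set D) : Prop := ∀ n, S.obj n ∈ Y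

/-- The resolution is `Hom(-,Y)`-acyclic, i.e. proper. -/
def IsProper (Y : Set D) : Prop :=
  ∀ B ∈ Y,
    (∀ f : N ⟶ B, ∃ g : S.obj 0 ⟶ B, S.aug ≫ g = f) ∧
    (∀ u : S.obj 0 ⟶ B, S.aug ≫ u = 0 → ∃ v : S.obj 1 ⟶ B, S.d 0 ≫ v = u) ∧
    (∀ (n : ℕ) (u : S.obj (n+1) ⟶ B), S.d n ≫ u = 0 → ∃ v : S.obj (n+2) ⟶ B, S.d (n+1) ≫ v = u)

/-- The resolution (with its augmentation) is `Hom(X,-)`-acyclic. -/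
def IsCoacyclic (X : Set D) : Prop :=
  ∀ A ∈ X,
    (∀ u : A ⟶ N, u ≫ S.aug = 0 → u = 0) ∧
    (∀ u : A ⟶ S.obj 0, u ≫ S.d 0 = 0 → ∃ v : A ⟶ N, v ≫ S.aug = u) ∧
    (∀ (n : ℕ) (u : A ⟶ S.obj (n+1)), u ≫ S.d (n+1) = 0 → ∃ v : A ⟶ S.obj n, v ≫ S.d n = u)

/-- The augmented complex `0 → N → obj 0 → obj 1 → ⋯` is exact. -/
def IsExactRes : Prop :=
  Mono S.aug ∧ (ShortComplex.mk S.aug (S.d 0) S.daug).Exact ∧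
    ∀ n : ℕ, (ShortComplex.mk (S.d n) (S.d (n+1)) (S.dd n)).Exact

/-- The resolution is admissible: `0 → N → obj 0 → obj 1` is exact. -/
def IsAdmissible : Prop :=
  Mono S.aug ∧ (ShortComplex.mk S.aug (S.d 0) S.daug).Exact

end RightRes

/-- The class of objects admitting a proper right `Y`-resolution. -/
def RPRes (Y : Set D) : Set D :=
  {N | ∃ S : RightRes N, S.InClass Y ∧ S.IsProper Y}

/-- `(X,Y)` is a balanced pair with respect to `(Xt,Yt)`. -/
def IsBalancedPair (X Y Xt Yt : Set D) : Prop :=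
  X ⊆ Xt ∧ Xt ⊆ LPRes X ∧ Y ⊆ Yt ∧ Yt ⊆ RPRes Y ∧
  (∀ M ∈ Xt, ∃ R : LeftRes M, R.InClass X ∧ R.IsProper X ∧ R.IsCoacyclic Y) ∧
  (∀ N ∈ Yt, ∃ S : RightRes N, S.InClass Y ∧ S.IsProper Y ∧ S.IsCoacyclic X)

/-- `(X,Y)` is an admissible balanced pair with respect to `(Xt,Yt)`. -/
def IsAdmissibleBalancedPair (X Y Xt Yt : Set D) : Prop :=
  X ⊆ Xt ∧ Xt ⊆ LPRes X ∧ Y ⊆ Yt ∧ Yt ⊆ RPRes Y ∧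
  (∀ M ∈ Xt, ∃ R : LeftRes M, R.InClass X ∧ R.IsProper X ∧ R.IsCoacyclic Y ∧ R.IsAdmissible) ∧
  (∀ N ∈ Yt, ∃ S : RightRes N, S.InClass Y ∧ S.IsProper Y ∧ S.IsCoacyclic X ∧ S.IsAdmissible)

/-- Objects of left `X`-resolution dimension at most `n`. -/
def ResDimLE (X : Set D) : ℕ → Set D
  | 0 => X
  | (n+1) => {M | ∃ K ∈ ResDimLE X n, ∃ A ∈ X, ∃ (f : K ⟶ A) (g : A ⟶ M), IsSES f g}

/-- `X^∧` : objects of finite left `X`-resolution dimension. -/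
def ResHat (X : Set D) : Set D := {M | ∃ n, M ∈ ResDimLE X n}

/-- Objects of right `X`-resolution dimension at most `n`. -/
def CoresDimLE (X : Set D) : ℕ → Set D
  | 0 => X
  | (n+1) => {M | ∃ A ∈ X, ∃ K ∈ CoresDimLE X n, ∃ (f : M ⟶ A) (g : A ⟶ K), IsSES f g}

/-- `X^∨` : objects of finite right `X`-resolution dimension. -/
def CoresVee (X : Set D) : Set D := {M | ∃ n, M ∈ CoresDimLE X n}

section Ext

variable [HasExt.{w} D]

/-- `Ext^i (A, B) = 0`. -/
def ExtZero (A B : D) (i : ℕ) : Prop := Subsingleton (Abelian.Ext.{w} A B i)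

/-- `X^⊥`: all higher Ext's from objects of `X` vanish. -/
def ExtPerp (X : Set D) : Set D :=
  {N | ∀ A ∈ X, ∀ i : ℕ, 1 ≤ i → ExtZero.{w} A N i}

/-- `^⊥Y`: all higher Ext's into objects of `Y` vanish. -/
def PerpExt (Y : Set D) : Set D :=
  {M | ∀ B ∈ Y, ∀ i : ℕ, 1 ≤ i → ExtZero.{w} M B i}

/-- `[(X,ω);(ν,Y)]` is a finite balanced system. -/
structure IsFiniteBalancedSystem (X ω ν Y : Set D) : Prop where
  pointedX : Pointed X
  extClosedX : ExtensionClosed X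
  pointedY : Pointed Y
  extClosedY : ExtensionClosed Y
  relCogenOmega : RelCogenerator ω X
  idXomega : ∀ A ∈ X, ∀ W ∈ ω, ∀ i : ℕ, 1 ≤ i → ExtZero.{w} A W i
  relGenNu : RelGenerator ν Y
  pdYnu : ∀ V ∈ ν, ∀ B ∈ Y, ∀ i : ℕ, 1 ≤ i → ExtZero.{w} V B i
  ext1_hatX_nu : ∀ M ∈ ResHat X, ∀ V ∈ ν, ExtZero.{w} M V 1
  ext1_hatOmega_Y : ∀ H ∈ ResHat ω, ∀ B ∈ Y, ExtZero.{w} H B 1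
  ext1_omega_veeY : ∀ W ∈ ω, ∀ N ∈ CoresVee Y, ExtZero.{w} W N 1
  ext1_X_veeNu : ∀ A ∈ X, ∀ L ∈ CoresVee ν, ExtZero.{w} A L 1

/-- `[(X,ω);(ν,Y)]` is a strongly finite balanced system. -/
structure IsStronglyFiniteBalancedSystem (X ω ν Y : Set D)
    extends IsFiniteBalancedSystem.{w} X ω ν Y : Prop where
  pdYomega : ∀ W ∈ ω, ∀ B ∈ Y, ∀ i : ℕ, 1 ≤ i → ExtZero.{w} W B i
  idXnu : ∀ A ∈ X, ∀ V ∈ ν, ∀ i : ℕ, 1 ≤ i → ExtZero.{w} A V i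

end Ext

end BalancedSystems
namespace BalancedSystems

variable {D : Type u} [Category.{v} D] [Abelian D]

/-- A bounded below complex `⋯ → M 2 → M 1 → M 0 → 0`, where `M 0` plays the
role of the `(-1)`-st term `M₋₁`. -/
structure BBComplex (D : Type u) [Category.{v} D] [Abelian D] : Type (max u v) where
  M : ℕ → D
  d : ∀ n : ℕ, M (n+1) ⟶ M n
  dd : ∀ n : ℕ, d (n+1) ≫ d n = 0

/-- A bounded below complex is `Hom(X,-)`-acyclic. -/
def BBComplex.HomAcyclic (X : Set D) (K : BBComplex D) : Prop :=
  ∀ A ∈ X,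
    (∀ f : A ⟶ K.M 0, ∃ g : A ⟶ K.M 1, g ≫ K.d 0 = f) ∧
    (∀ (n : ℕ) (f : A ⟶ K.M (n+1)), f ≫ K.d n = 0 →
      ∃ g : A ⟶ K.M (n+2), g ≫ K.d (n+1) = f)

/-- A short complex `Z → Mo → Z'` (i.e. `0 → Z → Mo → Z' → 0`) is
`Hom(X,-)`-acyclic. -/
def ShortHomAcyclic (X : Set D) {Z Mo Z' : D} (ι : Z ⟶ Mo) (p : Mo ⟶ Z') : Prop :=
  ∀ A ∈ X,
    (∀ u : A ⟶ Z, u ≫ ι = 0 → u = 0) ∧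
    (∀ u : A ⟶ Mo, u ≫ p = 0 → ∃ v : A ⟶ Z, v ≫ ι = u) ∧
    (∀ u : A ⟶ Z', ∃ v : A ⟶ Mo, v ≫ p = u)

namespace LeftRes

variable {M : D} (R : LeftRes M)

/-- Precomposition with the differential, as a morphism of abelian groups
`Hom(obj n, N) →+ Hom(obj (n+1), N)`. -/
def precompHom (N : D) (n : ℕ) : (R.obj n ⟶ N) →+ (R.obj (n+1) ⟶ N) :=
  AddMonoidHom.mk' (fun g => R.d n ≫ g) (by intro a b; simp)

/-- Cocycles of the complex `Hom(R, N)` in degree `n`. -/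
def cocycles (N : D) (n : ℕ) : AddSubgroup (R.obj n ⟶ N) := (R.precompHom N n).ker

/-- The relative extension groups `Ext̲ⁱ_X(M,N)` computed from the proper left
`X`-resolution `R` of `M`: the `i`-th cohomology of `Hom(R, N)`. -/
def ExtGrp (N : D) : ℕ → Type v
  | 0 => R.cocycles N 0
  | (n+1) => R.cocycles N (n+1) ⧸
      ((R.precompHom N n).range.addSubgroupOf (R.cocycles N (n+1)))

noncomputable instance (N : D) : ∀ i, AddCommGroup (R.ExtGrp N i)
  | 0 => inferInstanceAs (AddCommGroup (R.cocycles N 0))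
  | (n+1) => inferInstanceAs (AddCommGroup (R.cocycles N (n+1) ⧸
      ((R.precompHom N n).range.addSubgroupOf (R.cocycles N (n+1)))))

/-- Functoriality of `Ext̲⁰_X(M,-)`: postcomposition on `0`-cocycles. -/
def ext0Map {N N' : D} (g : N ⟶ N') (x : R.ExtGrp N 0) : R.ExtGrp N' 0 :=
  (⟨(x : R.cocycles N 0).1 ≫ g, by
      have hx := (x : R.cocycles N 0).2
      simp only [cocycles, AddMonoidHom.mem_ker, precompHom, AddMonoidHom.mk'_apply] at hx ⊢
      rw [← Category.assoc, hx, zero_comp]⟩ : R.cocycles N' 0)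

end LeftRes

namespace RightRes

variable {N : D} (S : RightRes N)

/-- Postcomposition with the differential, as a morphism of abelian groups
`Hom(M, obj n) →+ Hom(M, obj (n+1))`. -/
def postcompHom (M : D) (n : ℕ) : (M ⟶ S.obj n) →+ (M ⟶ S.obj (n+1)) :=
  AddMonoidHom.mk' (fun g => g ≫ S.d n) (by intro a b; simp)

/-- Cocycles of the complex `Hom(M, S)` in degree `n`. -/
def cocycles (M : D) (n : ℕ) : AddSubgroup (M ⟶ S.obj n) := (S.postcompHom M n).ker

/-- The relative extension groups `Ext̄ⁱ_Y(M,N)` computed from the proper right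
`Y`-resolution `S` of `N`: the `i`-th cohomology of `Hom(M, S)`. -/
def ExtGrp (M : D) : ℕ → Type v
  | 0 => S.cocycles M 0
  | (n+1) => S.cocycles M (n+1) ⧸
      ((S.postcompHom M n).range.addSubgroupOf (S.cocycles M (n+1)))

noncomputable instance (M : D) : ∀ i, AddCommGroup (S.ExtGrp M i)
  | 0 => inferInstanceAs (AddCommGroup (S.cocycles M 0))
  | (n+1) => inferInstanceAs (AddCommGroup (S.cocycles M (n+1) ⧸
      ((S.postcompHom M n).range.addSubgroupOf (S.cocycles M (n+1)))))

end RightRes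

section ChainComplexes

/-- The class of complexes all of whose terms lie in `X`. -/
def chClass (X : Set D) : Set (ChainComplex D ℤ) := {K | ∀ n : ℤ, K.X n ∈ X}

/-- `ν̃` : the class of exact complexes all of whose cycle objects lie in `ν`. -/
noncomputable def tildeClass (ν : Set D) : Set (ChainComplex D ℤ) :=
  {K | (∀ n : ℤ, K.ExactAt n) ∧ ∀ n : ℤ, (kernel (K.d n (n-1)) : D) ∈ ν}

end ChainComplexes

end BalancedSystems
namespace BalancedSystems

variable {D : Type u} [Category.{v} D] [Abelian D]

section HomComplex

variable (K L : ChainComplex D ℤ)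

/-- The `m`-th term of the Hom-complex `Hom(K,L)`:
`∏ᵢ Hom(Kᵢ, L_{i+m})`. -/
abbrev HomCgrp (m : ℤ) : Type v := ∀ i : ℤ, K.X i ⟶ L.X (i + m)

/-- The differential `∂_m` of the Hom-complex `Hom(K,L)`, going from degree `m`
to degree `m' = m - 1`, given by `∂_m(f)ᵢ = ∂^L_{m+i} ∘ fᵢ − (−1)^m fᵢ₋₁ ∘ ∂^K_i`. -/
noncomputable def homCdiff (m m' : ℤ) (h : m' = m - 1) :
    HomCgrp K L m →+ HomCgrp K L m' :=
  AddMonoidHom.mk'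
    (fun f i => f i ≫ L.d (i + m) (i + m') -
      (m.negOnePow : ℤ) •
        (K.d i (i-1) ≫ f (i-1) ≫ eqToHom (congrArg L.X (show (i-1) + m = i + m' by omega))))
    (by
      intro a b
      funext i
      simp only [Pi.add_apply, Preadditive.add_comp, Preadditive.comp_add, smul_add]
      abel)

/-- The `m`-th cohomology group of the Hom-complex `Hom(K,L)`. -/
noncomputable def HomCoh (m : ℤ) : Type v :=
  (homCdiff K L m (m-1) rfl).ker ⧸
    ((homCdiff K L (m+1) m (by omega)).range.addSubgroupOf (homCdiff K L m (m-1) rfl).ker)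

noncomputable instance (m : ℤ) : AddCommGroup (HomCoh K L m) :=
  inferInstanceAs (AddCommGroup ((homCdiff K L m (m-1) rfl).ker ⧸
    ((homCdiff K L (m+1) m (by omega)).range.addSubgroupOf (homCdiff K L m (m-1) rfl).ker)))

end HomComplex

end BalancedSystems
namespace BalancedSystems

variable {D : Type u} [Category.{v} D] [Abelian D]

/-- `L_X(X',X'')`: objects of `X''` admitting a proper left `X`-resolution with
all cycles in `X'`. -/
noncomputable def LClass (X X' X'' : Set D) : Set D :=
  {M | M ∈ X'' ∧ ∃ R : LeftRes M, R.InClass X ∧ R.IsProper X ∧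
    (kernel R.aug : D) ∈ X' ∧ ∀ n : ℕ, (kernel (R.d n) : D) ∈ X'}

/-- `L̄_X(X',X'') := L_X(X',X'') ∪ X`. -/
noncomputable def LBarClass (X X' X'' : Set D) : Set D := LClass X X' X'' ∪ X

/-- `R^Y(Y'',Y')`: objects of `Y''` admitting a proper right `Y`-resolution with
all cocycles in `Y'`. -/
noncomputable def RClass (Y Y'' Y' : Set D) : Set D :=
  {N | N ∈ Y'' ∧ ∃ S : RightRes N, S.InClass Y ∧ S.IsProper Y ∧
    (cokernel S.aug : D) ∈ Y' ∧ ∀ n : ℕ, (cokernel (S.d n) : D) ∈ Y'}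

/-- `R̄^Y(Y'',Y') := R^Y(Y'',Y') ∪ Y`. -/
noncomputable def RBarClass (Y Y'' Y' : Set D) : Set D := RClass Y Y'' Y' ∪ Y

section Ext

variable [HasExt.{w} D]

/-- `[(X,ω);(ν,Y)]` is a balanced system with respect to `[(X',X'');(Y'',Y')]`. -/
def IsBalancedSystem (X ω ν Y X' X'' Y'' Y' : Set D) : Prop :=
  (X ⊆ X'' ∧ X' ⊆ X'' ∧ X'' ⊆ LPRes X) ∧
  (Y ⊆ Y'' ∧ Y' ⊆ Y'' ∧ Y'' ⊆ RPRes Y) ∧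
  GeneratorIn X X'' ∧
  CogeneratorIn Y Y'' ∧
  RelGenerator ν Y ∧
  RelCogenerator ω X ∧
  ((∀ M ∈ X'', ∀ V ∈ ν, ExtZero.{w} M V 1) ∧ (∀ L ∈ X', ∀ B ∈ Y, ExtZero.{w} L B 1)) ∧
  ((∀ W ∈ ω, ∀ N ∈ Y'', ExtZero.{w} W N 1) ∧ (∀ A ∈ X, ∀ P ∈ Y', ExtZero.{w} A P 1))

/-- `(X,Y)` is a complete hereditary cotorsion pair. -/
def IsCompleteHereditaryCotorsionPair (X Y : Set D) : Prop :=
  (∀ M : D, M ∈ X ↔ ∀ B ∈ Y, ExtZero.{w} M B 1) ∧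
  (∀ N : D, N ∈ Y ↔ ∀ A ∈ X, ExtZero.{w} A N 1) ∧
  (∀ M : D, ∃ K ∈ Y, ∃ A ∈ X, ∃ (f : K ⟶ A) (g : A ⟶ M), IsSES f g) ∧
  (∀ M : D, ∃ B ∈ Y, ∃ Q ∈ X, ∃ (f : M ⟶ B) (g : B ⟶ Q), IsSES f g) ∧
  (∀ A ∈ X, ∀ B ∈ Y, ∀ i : ℕ, 1 ≤ i → ExtZero.{w} A B i)

/-- `LPRes⁰(X)`: objects of `LPRes(X)` admitting an exact left `X`-resolution
with all cycles in `X^⊥`. -/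
noncomputable def LPRes0 (X : Set D) : Set D :=
  LPRes X ∩ {M | ∃ R : LeftRes M, R.InClass X ∧ R.IsExactRes ∧
    (kernel R.aug : D) ∈ ExtPerp.{w} X ∧ ∀ n : ℕ, (kernel (R.d n) : D) ∈ ExtPerp.{w} X}

/-- `RPRes⁰(Y)`: objects of `RPRes(Y)` admitting an exact right `Y`-resolution
with all cocycles in `^⊥Y`. -/
noncomputable def RPRes0 (Y : Set D) : Set D :=
  RPRes Y ∩ {N | ∃ S : RightRes N, S.InClass Y ∧ S.IsExactRes ∧
    (cokernel S.aug : D) ∈ PerpExt.{w} Y ∧ ∀ n : ℕ, (cokernel (S.d n) : D) ∈ PerpExt.{w} Y}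

end Ext

end BalancedSystems

namespace BalancedSystems

namespace LeftRes

variable {C : Type u} [Category.{v} C] [Abelian C] {L : C} (R : LeftRes L)

lemma mem_cocycles {N : C} {n : ℕ} {x : R.obj n ⟶ N} :
    x ∈ R.cocycles N n ↔ R.d n ≫ x = 0 := Iff.rfl

/-- Coboundaries of the complex `Hom(R, N)` in degree `n`; in degree `0` only zero. -/
def coboundaries (N : C) : ∀ n, AddSubgroup (R.obj n ⟶ N)
  | 0 => ⊥
  | (n+1) => (R.precompHom N n).range

lemma mem_coboundaries_succ {N : C} {n : ℕ} {x : R.obj (n+1) ⟶ N} :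
    x ∈ R.coboundaries N (n+1) ↔ ∃ y : R.obj n ⟶ N, R.d n ≫ y = x := Iff.rfl

lemma d_comp_of_mem_coboundaries {N : C} :
    ∀ {n : ℕ} {x : R.obj n ⟶ N}, x ∈ R.coboundaries N n → R.d n ≫ x = 0
  | 0, x, hx => by
    obtain rfl : x = 0 := hx
    simp
  | (n+1), x, hx => by
    obtain ⟨y, rfl⟩ := R.mem_coboundaries_succ.1 hx
    rw [← Category.assoc, R.dd, zero_comp]

lemma comp_mem_coboundaries {N N' : C} (g : N ⟶ N') :
    ∀ {n : ℕ} {x : R.obj n ⟶ N}, x ∈ R.coboundaries N n → x ≫ g ∈ R.coboundaries N' n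
  | 0, x, hx => by
    obtain rfl : x = 0 := hx
    rw [zero_comp]
    exact zero_mem _
  | (n+1), x, hx => by
    obtain ⟨y, rfl⟩ := R.mem_coboundaries_succ.1 hx
    exact R.mem_coboundaries_succ.2 ⟨y ≫ g, by simp⟩

/-- The class in `ExtGrp N n` of a cocycle. -/
noncomputable def extClass (N : C) : ∀ n, R.cocycles N n →+ R.ExtGrp N n
  | 0 => AddMonoidHom.id (R.cocycles N 0)
  | (n+1) => QuotientAddGroup.mk'
      ((R.precompHom N n).range.addSubgroupOf (R.cocycles N (n+1)))

lemma extClass_surjective (N : C) : ∀ n, Function.Surjective (R.extClass N n)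
  | 0 => Function.surjective_id
  | (_+1) => QuotientAddGroup.mk'_surjective _

lemma extClass_eq_zero {N : C} :
    ∀ {n : ℕ} (x : R.cocycles N n), R.extClass N n x = 0 ↔ x.1 ∈ R.coboundaries N n
  | 0, x => (Subtype.ext_iff : x = 0 ↔ x.1 = 0)
  | (n+1), x => by
    refine (QuotientAddGroup.eq_zero_iff (N := (R.precompHom N n).range.addSubgroupOf
      (R.cocycles N (n+1))) x).trans ?_
    exact AddSubgroup.mem_addSubgroupOf

lemma extClass_eq {N : C} {n : ℕ} {x y : R.cocycles N n} :
    R.extClass N n x = R.extClass N n y ↔ x.1 - y.1 ∈ R.coboundaries N n := by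
  rw [← sub_eq_zero, ← map_sub, extClass_eq_zero]
  rfl

/-- Postcomposition with `g`, on cocycles. -/
def cocyclesMap {N N' : C} (g : N ⟶ N') (n : ℕ) : R.cocycles N n →+ R.cocycles N' n where
  toFun x := ⟨x.1 ≫ g, R.mem_cocycles.2 (by
    rw [← Category.assoc, R.mem_cocycles.1 x.2, zero_comp])⟩
  map_zero' := Subtype.ext zero_comp
  map_add' _ _ := Subtype.ext (Preadditive.add_comp _ _ _ _ _ _)

@[simp] lemma cocyclesMap_coe {N N' : C} (g : N ⟶ N') (n : ℕ) (x : R.cocycles N n) :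
    (R.cocyclesMap g n x).1 = x.1 ≫ g := rfl

/-- Functoriality of `Ext̲ⁿ(L,-)`: the map on cohomology induced by postcomposition with `g`. -/
noncomputable def extMap {N N' : C} (g : N ⟶ N') (n : ℕ) : R.ExtGrp N n →+ R.ExtGrp N' n :=
  (R.extClass N n).liftOfSurjective (R.extClass_surjective N n)
    ⟨(R.extClass N' n).comp (R.cocyclesMap g n), fun x hx =>
      (R.extClass_eq_zero _).2 (R.comp_mem_coboundaries g ((R.extClass_eq_zero x).1 hx))⟩

variable {M' M M'' : C} (α : M' ⟶ M) (β : M ⟶ M'')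

lemma extMap_extClass {N N' : C} (g : N ⟶ N') (n : ℕ) (x : R.cocycles N n) :
    R.extMap g n (R.extClass N n x) = R.extClass N' n (R.cocyclesMap g n x) :=
  AddMonoidHom.liftOfRightInverse_comp_apply _ _ _ _ x

/-- Pairs `(y, v)` of a cochain `y` with values in `M` and a cocycle `v` with values in `M'`
one degree higher whose image in `M` is the coboundary of `y`. -/
def Zigzag (n : ℕ) : AddSubgroup ((R.obj n ⟶ M) × R.cocycles M' (n+1)) where
  carrier := {p | p.2.1 ≫ α = R.d n ≫ p.1}
  zero_mem' := by simp
  add_mem' {p q} hp hq := by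
    simp only [Set.mem_ofPred_eq] at hp hq ⊢
    simp [hp, hq]
  neg_mem' {p} hp := by
    simp only [Set.mem_ofPred_eq] at hp ⊢
    simp [hp]

variable {α β} in
/-- The cocycle `y ≫ β` underlying a zigzag `(y, v)`. -/
def zigzagCocycle (w : α ≫ β = 0) (n : ℕ) : R.Zigzag α n →+ R.cocycles M'' n where
  toFun p := ⟨p.1.1 ≫ β, R.mem_cocycles.2 (by
    have hp : p.1.2.1 ≫ α = R.d n ≫ p.1.1 := p.2
    rw [← Category.assoc, ← hp, Category.assoc, w, comp_zero])⟩
  map_zero' := Subtype.ext zero_comp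
  map_add' _ _ := Subtype.ext (Preadditive.add_comp _ _ _ _ _ _)

/-- The class of `v` for a zigzag `(y, v)`. -/
noncomputable def zigzagEnd (n : ℕ) : R.Zigzag α n →+ R.ExtGrp M' (n+1) :=
  (R.extClass M' (n+1)).comp ((AddMonoidHom.snd _ _).comp (R.Zigzag α n).subtype)

section Exactness

variable {α β} {𝒳 : Set C} (hac : ShortHomAcyclic 𝒳 α β) (hRc : R.InClass 𝒳)
include hac hRc

lemma cancel_of_acyclic {n : ℕ} {u u' : R.obj n ⟶ M'} (h : u ≫ α = u' ≫ α) : u = u' :=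
  sub_eq_zero.1 ((hac _ (hRc n)).1 _ (by rw [Preadditive.sub_comp, h, sub_self]))

lemma exists_coboundary_lift :
    ∀ {n : ℕ} {x : R.obj n ⟶ M''}, x ∈ R.coboundaries M'' n →
      ∃ b ∈ R.coboundaries M n, b ≫ β = x
  | 0, x, hx => by
    obtain rfl : x = 0 := hx
    exact ⟨0, zero_mem _, zero_comp⟩
  | (n+1), x, hx => by
    obtain ⟨t, rfl⟩ := R.mem_coboundaries_succ.1 hx
    obtain ⟨s, rfl⟩ := (hac _ (hRc n)).2.2 t
    exact ⟨R.d n ≫ s, R.mem_coboundaries_succ.2 ⟨s, rfl⟩, Category.assoc _ _ _⟩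

/-- A cochain in `M` whose image in `M''` is a coboundary comes from `M'` up to a coboundary. -/
lemma exists_lift_modulo_coboundary {n : ℕ} {y : R.obj n ⟶ M}
    (hy : y ≫ β ∈ R.coboundaries M'' n) :
    ∃ u : R.obj n ⟶ M', y - u ≫ α ∈ R.coboundaries M n := by
  obtain ⟨b, hb, hby⟩ := R.exists_coboundary_lift hac hRc hy
  obtain ⟨u, hu⟩ := (hac _ (hRc n)).2.1 (y - b) (by rw [Preadditive.sub_comp, hby, sub_self])
  exact ⟨u, by rwa [hu, sub_sub_cancel]⟩

lemma zigzagCocycle_surjective (w : α ≫ β = 0) (n : ℕ) :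
    Function.Surjective (R.zigzagCocycle w n) := by
  rintro ⟨z, hz⟩
  obtain ⟨y, rfl⟩ := (hac _ (hRc n)).2.2 z
  obtain ⟨v, hv⟩ := (hac _ (hRc (n+1))).2.1 (R.d n ≫ y) (by
    rw [Category.assoc]; exact R.mem_cocycles.1 hz)
  have hvc : v ∈ R.cocycles M' (n+1) := R.mem_cocycles.2 (R.cancel_of_acyclic hac hRc (by
    rw [Category.assoc, hv, ← Category.assoc, R.dd, zero_comp, zero_comp]))
  exact ⟨⟨(y, ⟨v, hvc⟩), hv⟩, rfl⟩

/-- The class of `v` in a zigzag `(y, v)` is determined by the class of `y ≫ β`. -/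
lemma zigzag_ker_le (w : α ≫ β = 0) (n : ℕ) :
    ((R.extClass M'' n).comp (R.zigzagCocycle w n)).ker ≤ (R.zigzagEnd α n).ker := by
  rintro ⟨⟨y, v⟩, hp⟩ h
  replace hp : v.1 ≫ α = R.d n ≫ y := hp
  obtain ⟨u, hu⟩ := R.exists_lift_modulo_coboundary hac hRc ((R.extClass_eq_zero _).1 h)
  refine (R.extClass_eq_zero _).2 (R.mem_coboundaries_succ.2 ⟨u, ?_⟩)
  refine R.cancel_of_acyclic hac hRc ?_
  have h0 := R.d_comp_of_mem_coboundaries hu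
  rw [Preadditive.comp_sub, sub_eq_zero] at h0
  exact (Category.assoc _ _ _).trans (h0.symm.trans hp.symm)

lemma zigzagClass_surjective (w : α ≫ β = 0) (n : ℕ) :
    Function.Surjective ((R.extClass M'' n).comp (R.zigzagCocycle w n)) :=
  (R.extClass_surjective M'' n).comp (R.zigzagCocycle_surjective hac hRc w n)

omit hac hRc in
/-- The connecting homomorphism `Ext̲ⁿ(L,M'') → Ext̲ⁿ⁺¹(L,M')`, sending `[y ≫ β]` to `[v]` for
every zigzag `(y, v)`. -/
noncomputable def extDelta (hac : ShortHomAcyclic 𝒳 α β) (hRc : R.InClass 𝒳) (w : α ≫ β = 0)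
    (n : ℕ) : R.ExtGrp M'' n →+ R.ExtGrp M' (n+1) :=
  ((R.extClass M'' n).comp (R.zigzagCocycle w n)).liftOfSurjective
    (R.zigzagClass_surjective hac hRc w n) ⟨R.zigzagEnd α n, R.zigzag_ker_le hac hRc w n⟩

lemma extDelta_zigzag (w : α ≫ β = 0) (n : ℕ) (p : R.Zigzag α n) :
    R.extDelta hac hRc w n (R.extClass M'' n (R.zigzagCocycle w n p)) =
      R.extClass M' (n+1) p.1.2 :=
  AddMonoidHom.liftOfRightInverse_comp_apply _ _ _ _ p

lemma extMap_zero_injective : Function.Injective (R.extMap α 0) := by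
  rw [injective_iff_map_eq_zero]
  intro a ha
  obtain ⟨x, rfl⟩ := R.extClass_surjective _ _ a
  rw [extMap_extClass, extClass_eq_zero] at ha
  exact (R.extClass_eq_zero x).2 ((hac _ (hRc 0)).1 _ ha)

lemma exact_extMap_extMap (w : α ≫ β = 0) (n : ℕ) :
    Function.Exact (R.extMap α n) (R.extMap β n) := by
  intro a
  obtain ⟨y, rfl⟩ := R.extClass_surjective _ _ a
  constructor
  · intro h
    rw [extMap_extClass, extClass_eq_zero] at h
    obtain ⟨u, hu⟩ := R.exists_lift_modulo_coboundary hac hRc h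
    have huc : u ∈ R.cocycles M' n := R.mem_cocycles.2 (R.cancel_of_acyclic hac hRc (by
      have h0 := R.d_comp_of_mem_coboundaries hu
      rw [Preadditive.comp_sub, R.mem_cocycles.1 y.2, zero_sub, neg_eq_zero] at h0
      rw [Category.assoc, h0, zero_comp]))
    refine ⟨R.extClass _ _ ⟨u, huc⟩, ?_⟩
    rw [extMap_extClass]
    exact (R.extClass_eq.2 hu).symm
  · rintro ⟨b, hb⟩
    obtain ⟨u, rfl⟩ := R.extClass_surjective _ _ b
    rw [← hb, extMap_extClass, extMap_extClass, extClass_eq_zero]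
    simp [w]

lemma exact_extMap_extDelta (w : α ≫ β = 0) (n : ℕ) :
    Function.Exact (R.extMap β n) (R.extDelta hac hRc w n) := by
  intro a
  constructor
  · intro h
    obtain ⟨p, rfl⟩ := R.zigzagClass_surjective hac hRc w n a
    rw [AddMonoidHom.comp_apply, extDelta_zigzag, extClass_eq_zero] at h
    obtain ⟨⟨y, v⟩, hp⟩ := p
    obtain ⟨u, hu⟩ := R.mem_coboundaries_succ.1 h
    replace hp : v.1 ≫ α = R.d n ≫ y := hp
    replace hu : R.d n ≫ u = v.1 := hu
    -- correcting `y` by `u` makes it a cocycle without changing its image in `M''`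
    refine ⟨R.extClass _ _ ⟨y - u ≫ α, R.mem_cocycles.2 ?_⟩, ?_⟩
    · rw [Preadditive.comp_sub, ← Category.assoc, hu, hp, sub_self]
    · rw [extMap_extClass]
      refine congrArg (R.extClass M'' n) (Subtype.ext ?_)
      change (y - u ≫ α) ≫ β = y ≫ β
      rw [Preadditive.sub_comp, Category.assoc, w, comp_zero, sub_zero]
  · rintro ⟨b, rfl⟩
    obtain ⟨y, rfl⟩ := R.extClass_surjective _ _ b
    rw [extMap_extClass]
    -- a cocycle `y` in `M` gives the zigzag `(y, 0)`
    have h := R.extDelta_zigzag hac hRc w n ⟨(y.1, 0), by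
      change (0 : R.obj (n+1) ⟶ M') ≫ α = R.d n ≫ y.1
      rw [R.mem_cocycles.1 y.2, zero_comp]⟩
    exact h.trans (map_zero _)

lemma exact_extDelta_extMap (w : α ≫ β = 0) (n : ℕ) :
    Function.Exact (R.extDelta hac hRc w n) (R.extMap α (n+1)) := by
  intro a
  constructor
  · intro h
    obtain ⟨v, rfl⟩ := R.extClass_surjective _ _ a
    rw [extMap_extClass, extClass_eq_zero] at h
    obtain ⟨y, hy⟩ := R.mem_coboundaries_succ.1 h
    exact ⟨_, R.extDelta_zigzag hac hRc w n ⟨(y, v), hy.symm⟩⟩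
  · rintro ⟨b, rfl⟩
    obtain ⟨p, rfl⟩ := R.zigzagClass_surjective hac hRc w n b
    rw [AddMonoidHom.comp_apply, extDelta_zigzag, extMap_extClass, extClass_eq_zero]
    exact R.mem_coboundaries_succ.2 ⟨p.1.1, p.2.symm⟩

end Exactness

end LeftRes

end BalancedSystems

open BalancedSystems in
/-- If `0 → M′ → M → M″ → 0` is a `Hom(X,−)`-acyclic complex
and `L ∈ LPRes(X)`, then there is a long exact sequence
`0 → Ext̲⁰(L,M′) → Ext̲⁰(L,M) → Ext̲⁰(L,M″) → Ext̲¹(L,M′) → ⋯`. -/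
theorem statement5 {C : Type u} [Category.{v} C] [Abelian C]
    (𝒳 : Set C) (h𝒳 : IsoClosed 𝒳)
    {M' M M'' : C} (α : M' ⟶ M) (β : M ⟶ M'') (w : α ≫ β = 0)
    (hac : ShortHomAcyclic 𝒳 α β)
    {L : C} (R : LeftRes L) (hRc : R.InClass 𝒳) (hRp : R.IsProper 𝒳) :
    ∃ (f : ∀ i : ℕ, R.ExtGrp M' i →+ R.ExtGrp M i)
      (g : ∀ i : ℕ, R.ExtGrp M i →+ R.ExtGrp M'' i)
      (δ : ∀ i : ℕ, R.ExtGrp M'' i →+ R.ExtGrp M' (i+1)),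
      Function.Injective (f 0) ∧
      ∀ i : ℕ, Function.Exact (f i) (g i) ∧ Function.Exact (g i) (δ i) ∧
        Function.Exact (δ i) (f (i+1)) := by
  exact ⟨R.extMap α, R.extMap β, R.extDelta hac hRc w, R.extMap_zero_injective hac hRc,
    fun i => ⟨R.exact_extMap_extMap hac hRc w i, R.exact_extMap_extDelta hac hRc w i,
      R.exact_extDelta_extMap hac hRc w i⟩⟩
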